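/- Let ι be the identity permutation of [n] and let π = π_1 … π_n be a permutation of [n] that is not two-separated from ι. Then every run of big jumps of π that contains neither the value n nor the value n−1 is a suffix of π, i.e., its last position is position n. -/

import Mathlib

/-- Two permutations `π'` and `π''` of `Fin n` (viewed as linear orders: `π i` is the
element in position `i`) are two-separated if some element `a` is followed immediately
by `x` then `y` in `π'` and immediately by `v` then `w` in `π''`, where `x, y, v, w`
are four pairwise distinct elements. -/
def TwoSeparated (n : ℕ) (π' π'' : Equiv.Perm (Fin n)) : Prop :=
  ∃ i j : ℕ, ∃ hi : i + 2 < n, ∃ hj : j + 2 < n,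
    π' ⟨i, by omega⟩ = π'' ⟨j, by omega⟩ ∧
    ({π' ⟨i + 1, by omega⟩, π' ⟨i + 2, hi⟩,
      π'' ⟨j + 1, by omega⟩, π'' ⟨j + 2, hj⟩} : Finset (Fin n)).card = 4

/-- The value of the permutation `π` at the (0-indexed) position `k`, as an integer;
positions `≥ n` are sent to `0`. -/
def pval (n : ℕ) (π : Equiv.Perm (Fin n)) (k : ℕ) : ℤ :=
  if h : k < n then ((π ⟨k, h⟩ : ℕ) : ℤ) else 0

/-- The defining conditions of a run of big jumps `π_j, π_(j+1), …, π_(j+t)`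
(positions 0-indexed): `t ≥ 1`, the run fits inside the permutation, the first jump
is not in `{−2, −1, 1, 2, 3}` and the later jumps are not in `{−1, 1, 2}`. -/
def RunCore (n : ℕ) (π : Equiv.Perm (Fin n)) (j t : ℕ) : Prop :=
  1 ≤ t ∧ j + t < n ∧
  pval n π (j + 1) - pval n π j ∉ ({-2, -1, 1, 2, 3} : Set ℤ) ∧
  ∀ k : ℕ, j < k → k < j + t → pval n π (k + 1) - pval n π k ∉ ({-1, 1, 2} : Set ℤ)

/-- `π_j, …, π_(j+t)` is a run of big jumps of `π`: it satisfies the run conditions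
and is maximal, i.e. it can be extended neither to the left nor to the right. -/
def IsRunOfBigJumps (n : ℕ) (π : Equiv.Perm (Fin n)) (j t : ℕ) : Prop :=
  RunCore n π j t ∧
  ¬ (1 ≤ j ∧ RunCore n π (j - 1) (t + 1)) ∧
  ¬ RunCore n π j (t + 1)

/-!
If `π` is not two-separated from the identity and an entry `a` of `π`, not one of the two largest
values, is followed by at least two more entries, then one of the first two of these is `a + 1` or
`a + 2`, the two entries after `a` in the identity. Suppose that a run stops before the end of `π`:
its last jump is big, and the jump out of the run is `-1`, `1` or `2`. For the last entry but one
`b` of the run, the remark forces `π` to continue `b, b + 3, b + 2`. The first jump of a run is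
never `3`, so an entry `a` of the run precedes `b`, and the remark for `a` forces `b = a - 2`. But
then `a` occurs a second time, as `b + 2`.
-/

section Values

variable {n : ℕ} {π : Equiv.Perm (Fin n)} {k : ℕ}

theorem pval_of_lt (hk : k < n) : pval n π k = (π ⟨k, hk⟩ : ℕ) :=
  dif_pos hk

theorem pval_refl (hk : k < n) : pval n (Equiv.refl _) k = k :=
  pval_of_lt hk

theorem exists_pval_eq (hk : k < n) : ∃ m < n, pval n π k = m :=
  ⟨_, (π ⟨k, hk⟩).isLt, pval_of_lt hk⟩

variable (π) in
theorem pval_injOn : Set.InjOn (pval n π) (Set.Iio n) := fun a ha b hb hab => by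
  rw [pval_of_lt ha, pval_of_lt hb, Nat.cast_inj, Fin.val_inj, π.injective.eq_iff] at hab
  exact congrArg Fin.val hab

theorem pval_add_ne {d : ℕ} (hd : 0 < d) (hk : k + d < n) :
    pval n π (k + d) ≠ pval n π k := fun heq => by
  have : k + d = k := pval_injOn π hk (show k < n by omega) heq
  omega

theorem pval_add_two_lt (hk : k < n)
    (htop : pval n π k ≠ (n : ℤ) - 1 ∧ pval n π k ≠ (n : ℤ) - 2) : pval n π k + 2 < n := by
  obtain ⟨m, hm, hval⟩ := exists_pval_eq (π := π) hk
  omega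

end Values

section NotTwoSeparated

variable {n : ℕ} {π σ : Equiv.Perm (Fin n)} {i j : ℕ}

theorem pval_mem_or_pval_mem_of_not_twoSeparated (h : ¬ TwoSeparated n π σ)
    (hi : i + 2 < n) (hj : j + 2 < n) (hij : pval n π i = pval n σ j) :
    pval n π (i + 1) ∈ ({pval n σ (j + 1), pval n σ (j + 2)} : Set ℤ) ∨
      pval n π (i + 2) ∈ ({pval n σ (j + 1), pval n σ (j + 2)} : Set ℤ) := by
  have hi' : i < n ∧ i + 1 < n := by omega
  have hj' : j < n ∧ j + 1 < n := by omega
  have hxy : pval n π (i + 2) ≠ pval n π (i + 1) := pval_add_ne one_pos hi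
  have hvw : pval n σ (j + 2) ≠ pval n σ (j + 1) := pval_add_ne one_pos hj
  simp only [pval_of_lt, hi', hj', hi, hj, Nat.cast_inj, Fin.val_inj, ne_eq,
    Set.mem_insert_iff, Set.mem_singleton_iff] at hij hxy hvw ⊢
  by_contra! hdisj
  refine h ⟨i, j, hi, hj, hij, ?_⟩
  rw [Finset.card_insert_of_notMem, Finset.card_insert_of_notMem, Finset.card_pair] <;>
    grind

theorem sub_mem_or_sub_mem_of_not_twoSeparated_refl (h : ¬ TwoSeparated n π (Equiv.refl _))
    (hi : i + 2 < n) (hlow : pval n π i + 2 < n) :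
    pval n π (i + 1) - pval n π i ∈ ({1, 2} : Set ℤ) ∨
      pval n π (i + 2) - pval n π i ∈ ({1, 2} : Set ℤ) := by
  obtain ⟨m, -, hm⟩ := exists_pval_eq (π := π) (show i < n by omega)
  have hmn : m + 2 < n := by omega
  have hnext := pval_mem_or_pval_mem_of_not_twoSeparated h hi hmn (by rw [hm, pval_refl (by omega)])
  rw [pval_refl (by omega), pval_refl (by omega)] at hnext
  simp only [Set.mem_insert_iff, Set.mem_singleton_iff] at hnext ⊢
  omega

theorem jumps_eq_three_neg_one_of_not_twoSeparated_refl (h : ¬ TwoSeparated n π (Equiv.refl _))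
    (hi : i + 2 < n) (hlow : pval n π i + 2 < n)
    (hbig : pval n π (i + 1) - pval n π i ∉ ({-1, 1, 2} : Set ℤ))
    (hsmall : pval n π (i + 2) - pval n π (i + 1) ∈ ({-1, 1, 2} : Set ℤ)) :
    pval n π (i + 1) - pval n π i = 3 ∧ pval n π (i + 2) - pval n π (i + 1) = -1 := by
  have hnext := sub_mem_or_sub_mem_of_not_twoSeparated_refl h hi hlow
  have hne : pval n π (i + 1) ≠ pval n π i := pval_add_ne one_pos (by omega)
  simp only [Set.mem_insert_iff, Set.mem_singleton_iff] at hnext hbig hsmall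
  omega

theorem jump_eq_neg_two_of_not_twoSeparated_refl (h : ¬ TwoSeparated n π (Equiv.refl _))
    (hi : i + 2 < n) (hlow : pval n π i + 2 < n)
    (hbig : pval n π (i + 1) - pval n π i ∉ ({-1, 1, 2} : Set ℤ))
    (hthree : pval n π (i + 2) - pval n π (i + 1) = 3) :
    pval n π (i + 1) - pval n π i = -2 := by
  have hnext := sub_mem_or_sub_mem_of_not_twoSeparated_refl h hi hlow
  simp only [Set.mem_insert_iff, Set.mem_singleton_iff] at hnext hbig
  omega

theorem sub_notMem_of_not_twoSeparated_refl (h : ¬ TwoSeparated n π (Equiv.refl _))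
    (hi : i + 3 < n) (hlow : pval n π i + 2 < n) (hlow' : pval n π (i + 1) + 2 < n)
    (hbig : pval n π (i + 1) - pval n π i ∉ ({-1, 1, 2} : Set ℤ))
    (hbig' : pval n π (i + 2) - pval n π (i + 1) ∉ ({-1, 1, 2} : Set ℤ)) :
    pval n π (i + 3) - pval n π (i + 2) ∉ ({-1, 1, 2} : Set ℤ) := fun hsmall => by
  have hjumps : pval n π (i + 2) - pval n π (i + 1) = 3 ∧
      pval n π (i + 3) - pval n π (i + 2) = -1 :=
    jumps_eq_three_neg_one_of_not_twoSeparated_refl h hi hlow' hbig' hsmall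
  have hneg : pval n π (i + 1) - pval n π i = -2 :=
    jump_eq_neg_two_of_not_twoSeparated_refl h (by omega) hlow hbig hjumps.1
  have hne : pval n π (i + 3) ≠ pval n π i := pval_add_ne three_pos hi
  have heq : pval n π (i + 3) = pval n π i := by omega
  exact hne heq

end NotTwoSeparated

namespace RunCore

variable {n j t : ℕ} {π : Equiv.Perm (Fin n)}

theorem first_jump_notMem (hrun : RunCore n π j t) :
    pval n π (j + 1) - pval n π j ∉ ({-1, 1, 2, 3} : Set ℤ) := fun hmem =>
  hrun.2.2.1 (Or.inr hmem)

theorem jump_notMem (hrun : RunCore n π j t) {k : ℕ} (hjk : j ≤ k) (hk : k < j + t) :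
    pval n π (k + 1) - pval n π k ∉ ({-1, 1, 2} : Set ℤ) := by
  obtain rfl | hlt := hjk.eq_or_lt
  · have hfirst := hrun.first_jump_notMem
    simp only [Set.mem_insert_iff, Set.mem_singleton_iff] at hfirst ⊢
    tauto
  · exact hrun.2.2.2 k hlt hk

theorem succ (hrun : RunCore n π j t) (hlt : j + t + 1 < n)
    (hjump : pval n π (j + t + 1) - pval n π (j + t) ∉ ({-1, 1, 2} : Set ℤ)) :
    RunCore n π j (t + 1) := by
  refine ⟨by omega, hlt, hrun.2.2.1, fun k hjk hk => ?_⟩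
  obtain rfl | hk' := (Nat.lt_succ_iff.mp hk).eq_or_lt
  · exact hjump
  · exact hrun.jump_notMem hjk.le hk'

theorem next_jump_notMem (hrun : RunCore n π j t) (h : ¬ TwoSeparated n π (Equiv.refl _))
    (hval : ∀ k, j ≤ k → j + t ≤ k + 2 → k < j + t → pval n π k + 2 < n)
    (hlt : j + t + 1 < n) :
    pval n π (j + t + 1) - pval n π (j + t) ∉ ({-1, 1, 2} : Set ℤ) := by
  match t, hrun.1 with
  | 1, _ =>
    intro hsmall
    obtain ⟨hthree, -⟩ := jumps_eq_three_neg_one_of_not_twoSeparated_refl h hlt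
      (hval j le_rfl (by omega) (by omega)) (hrun.jump_notMem le_rfl (by omega)) hsmall
    exact hrun.first_jump_notMem (by simp [hthree])
  | s + 2, _ =>
    have hpos : j + s + 3 < n := hlt
    exact sub_notMem_of_not_twoSeparated_refl h hpos
      (hval (j + s) (by omega) (by omega) (by omega))
      (hval (j + s + 1) (by omega) (by omega) (by omega))
      (hrun.jump_notMem (k := j + s) (by omega) (by omega))
      (hrun.jump_notMem (k := j + s + 1) (by omega) (by omega))

end RunCore

theorem stmt15_general (n : ℕ) (π : Equiv.Perm (Fin n))
    (h : ¬ TwoSeparated n π (Equiv.refl (Fin n)))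
    (j t : ℕ) (hrun : RunCore n π j t) (hmax : ¬ RunCore n π j (t + 1))
    (hval : ∀ k : ℕ, j ≤ k → j + t ≤ k + 2 → k < j + t →
      pval n π k ≠ (n : ℤ) - 1 ∧ pval n π k ≠ (n : ℤ) - 2) :
    j + t = n - 1 := by
  have hjt : j + t < n := hrun.2.1
  by_contra hne
  have hlt : j + t + 1 < n := by omega
  have hlow : ∀ k, j ≤ k → j + t ≤ k + 2 → k < j + t → pval n π k + 2 < n :=
    fun k hjk hkt hk => pval_add_two_lt (hk.trans hjt) (hval k hjk hkt hk)
  exact hmax (hrun.succ hlt (hrun.next_jump_notMem h hlow hlt))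

/-- If `π` is not two-separated from the identity permutation, then every run of big
jumps of `π` containing neither the largest nor the second largest value (the values
`n` and `n−1` of the paper, i.e. `n−1` and `n−2` in the 0-indexed encoding) is a
suffix of `π`: its last position is the last position of the permutation. -/
theorem stmt15 (n : ℕ) (π : Equiv.Perm (Fin n))
    (h : ¬ TwoSeparated n π (Equiv.refl (Fin n)))
    (j t : ℕ) (hrun : IsRunOfBigJumps n π j t)
    (hval : ∀ k : ℕ, j ≤ k → k ≤ j + t →
      pval n π k ≠ (n : ℤ) - 1 ∧ pval n π k ≠ (n : ℤ) - 2) :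
    j + t = n - 1 :=
  stmt15_general n π h j t hrun.1 hrun.2.2 fun k hjk _ hk => hval k hjk hk.le
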